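/- arXiv:math/0412551 — 2 statements merged into one kernel-verified Lean document; each statement's English description precedes it below -/
import Mathlib

section
/- Kreps–Yan theorem for L^∞ with the norm topology: Let C ⊆ L^∞(Ω, F, P) be a norm-closed convex cone satisfying C ∩ L^∞_+ = {0} and -L^∞_+ ⊆ C. Then there exists a continuous linear functional μ on L^∞ that is strictly positive (⟨x, μ⟩ > 0 for all x ∈ L^∞_+ \ {0}) and satisfies ⟨x, μ⟩ ≤ 0 for all x ∈ C. -/
open MeasureTheory

open Filter Set
open scoped ENNReal Topology

/-!
Functionals in the polar cone of `C` are nonnegative, and a countable positive combination of them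
vanishes at a nonnegative `x` only if each of them does. Fix a strictly positive, σ-order continuous
functional `I` and an everywhere positive `e`, and choose `μ` in the polar cone for which the
supremum `s` of `I` over `N = {x ∈ [0, e] | μ x = 0}` is minimal. The set `N` is a sublattice. If
`s > 0`, then the `x ∈ N` with `I x` close to `s` are uniformly far from `C`: otherwise take `x n`
in `N` with `s - I (x n)` summable and small and with distance to `C` tending to `0`. By
modularity of `I`, the losses of a meet are at most the sum of the losses, so `z = ⨅ n, x n` has
`I z > 0`; yet `z ∈ C`, because `C` is closed and `x n - z ≥ 0`. Hence Hahn–Banach gives `ν` in the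
polar cone, strictly positive on those `x`, and `μ + ν` contradicts minimality. So `s = 0`, and `μ`
is strictly positive.
-/

namespace KrepsYan

section PolarCone

variable {E : Type*} [SeminormedAddCommGroup E] [NormedSpace ℝ E]

/-- The polar cone of `C`: the continuous linear functionals that are nonpositive on `C`. -/
def polarCone (C : Set E) : Set (StrongDual ℝ E) :=
  {μ | ∀ x ∈ C, μ x ≤ 0}

lemma zero_mem_polarCone (C : Set E) : 0 ∈ polarCone C := fun _ _ => le_rfl

lemma add_mem_polarCone {C : Set E} {μ ν : StrongDual ℝ E} (hμ : μ ∈ polarCone C)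
    (hν : ν ∈ polarCone C) : μ + ν ∈ polarCone C :=
  fun x hx => add_nonpos (hμ x hx) (hν x hx)

lemma nonneg_of_mem_polarCone [LE E] {C : Set E} (hneg : ∀ x, 0 ≤ x → -x ∈ C)
    {μ : StrongDual ℝ E} (hμ : μ ∈ polarCone C) {x : E} (hx : 0 ≤ x) : 0 ≤ μ x := by
  simpa using hμ _ (hneg x hx)

lemma neg_mem_polarCone_of_forall_le {C : PointedCone ℝ E} {f : StrongDual ℝ E} {u : ℝ}
    (hf : ∀ x ∈ C, u ≤ f x) : -f ∈ polarCone (C : Set E) := by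
  intro x hx
  by_contra! hfx
  replace hfx : f x < 0 := by simpa using hfx
  have hu : u ≤ 0 := by simpa using hf 0 C.zero_mem
  have hscale : u ≤ (u - 1) / f x * f x := by
    simpa using hf _ (C.smul_mem (div_nonneg_of_nonpos (by linarith) hfx.le) hx)
  rw [div_mul_cancel₀ _ hfx.ne] at hscale
  linarith

lemma exists_mem_polarCone_forall_pos {C : PointedCone ℝ E} {X : Set E} (hX : Convex ℝ X) {δ : ℝ}
    (hδ : 0 < δ) (hXC : ∀ x ∈ X, ∀ c ∈ C, δ ≤ dist x c) :
    ∃ ν ∈ polarCone (C : Set E), ∀ x ∈ X, 0 < ν x := by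
  have hdisj : Disjoint (Metric.thickening δ X) C := by
    refine Set.disjoint_left.2 fun c hc hcC => ?_
    obtain ⟨x, hx, hcx⟩ := Metric.mem_thickening_iff.1 hc
    exact (hXC x hx c hcC).not_gt (dist_comm c x ▸ hcx)
  obtain ⟨f, u, hfX, hfC⟩ := geometric_hahn_banach_open (hX.thickening δ)
    Metric.isOpen_thickening C.convex hdisj
  have hu : u ≤ 0 := by simpa using hfC 0 C.zero_mem
  refine ⟨-f, neg_mem_polarCone_of_forall_le hfC, fun x hx => ?_⟩
  simpa using (hfX x (Metric.self_subset_thickening hδ X hx)).trans_le hu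

lemma exists_pos_summable_smul {ι F : Type*} [Countable ι] [SeminormedAddCommGroup F]
    [NormedSpace ℝ F] [CompleteSpace F] (f : ι → F) :
    ∃ w : ι → ℝ, (∀ i, 0 < w i) ∧ Summable fun i => w i • f i := by
  obtain ⟨w, hw, hsum⟩ := ENNReal.exists_pos_tsum_mul_lt_of_countable one_ne_zero
    (fun i => ‖f i‖ₑ) (fun i => enorm_ne_top)
  refine ⟨fun i => w i, fun i => hw i, .of_nnnorm (ENNReal.tsum_coe_ne_top_iff_summable.1 ?_)⟩
  simpa [nnnorm_smul, mul_comm, enorm_eq_nnnorm] using (hsum.trans ENNReal.one_lt_top).ne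

lemma exists_mem_polarCone_forall_eq_zero [LE E] {C : Set E} (hneg : ∀ x, 0 ≤ x → -x ∈ C)
    {ι : Type*} [Countable ι] {f : ι → StrongDual ℝ E} (hf : ∀ i, f i ∈ polarCone C) :
    ∃ μ ∈ polarCone C, ∀ x, 0 ≤ x → μ x = 0 → ∀ i, f i x = 0 := by
  obtain ⟨w, hw, hsum⟩ := exists_pos_summable_smul f
  have hsum_apply (x : E) : HasSum (fun i => w i * f i x) ((∑' i, w i • f i) x) := by
    simpa using hsum.hasSum.mapL (ContinuousLinearMap.apply ℝ ℝ x)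
  refine ⟨∑' i, w i • f i, fun x hx => ?_, fun x hx hx0 i => ?_⟩
  · exact (hsum_apply x).nonpos fun i => mul_nonpos_of_nonneg_of_nonpos (hw i).le (hf i x hx)
  · have hterm := hsum_apply x
    rw [hx0, hasSum_zero_iff_of_nonneg fun i =>
      mul_nonneg (hw i).le (nonneg_of_mem_polarCone hneg (hf i) hx)] at hterm
    exact (mul_eq_zero.1 (congrFun hterm i)).resolve_left (hw i).ne'

lemma mem_of_le_of_tendsto_dist_zero [PartialOrder E] [IsOrderedAddMonoid E] {C : ProperCone ℝ E}
    (hneg : ∀ x : E, 0 ≤ x → -x ∈ C) {x c : ℕ → E} {z : E} (hz : ∀ n, z ≤ x n) (hc : ∀ n, c n ∈ C)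
    (hxc : Tendsto (fun n => dist (x n) (c n)) atTop (𝓝 0)) : z ∈ C := by
  have hmem (n : ℕ) : c n - x n + z ∈ C := by
    simpa [sub_add_eq_add_sub, add_sub_assoc] using
      C.add_mem (hc n) (hneg _ (sub_nonneg.2 (hz n)))
  have hlim : Tendsto (fun n => c n - x n) atTop (𝓝 0) :=
    tendsto_zero_iff_norm_tendsto_zero.2 (by simpa only [dist_eq_norm_sub'] using hxc)
  simpa using C.isClosed.mem_of_tendsto (hlim.add_const z) (.of_forall hmem)

end PolarCone

section Lattice

lemma sub_map_inf'_le_sum {G F : Type*} [AddCommGroup G] [Lattice G] [IsOrderedAddMonoid G]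
    [FunLike F G ℝ] [AddMonoidHomClass F G ℝ] (φ : F) {N : Set G} (hsup : SupClosed N)
    (hinf : InfClosed N) {s : ℝ} (hs : ∀ x ∈ N, φ x ≤ s) {ι : Type*} {t : Finset ι}
    (ht : t.Nonempty) {x : ι → G} (hx : ∀ i ∈ t, x i ∈ N) :
    s - φ (t.inf' ht x) ≤ ∑ i ∈ t, (s - φ (x i)) := by
  induction ht using Finset.Nonempty.cons_induction with
  | singleton i => simp
  | cons i t hi ht ih =>
    rw [Finset.forall_mem_cons] at hx
    have hmem : t.inf' ht x ∈ N := hinf.finsetInf'_mem ht hx.2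
    have hmodular : φ (x i ⊓ t.inf' ht x) + φ (x i ⊔ t.inf' ht x) =
        φ (x i) + φ (t.inf' ht x) := by
      rw [← map_add, inf_add_sup, map_add]
    rw [Finset.inf'_cons ht, Finset.sum_cons]
    linarith [ih hx.2, hs _ (hsup hx.1 hmem)]

/-- Countable order continuity of `φ` along decreasing sequences of nonnegative elements. The
existence of their infima is part of the notion, so it also encodes countable order completeness
of `E`. -/
def SigmaOrderContinuous {E : Type*} [Preorder E] [Zero E] (φ : E → ℝ) : Prop :=
  ∀ y : ℕ → E, Antitone y → (∀ n, 0 ≤ y n) →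
    ∃ z, IsGLB (range y) z ∧ Tendsto (fun n => φ (y n)) atTop (𝓝 (φ z))

lemma exists_nonneg_forall_le_half_le_map {G F : Type*} [AddCommGroup G] [Lattice G]
    [IsOrderedAddMonoid G] [FunLike F G ℝ] [AddMonoidHomClass F G ℝ] {φ : F}
    (hφ : SigmaOrderContinuous φ) {N : Set G} (hN0 : ∀ x ∈ N, 0 ≤ x) (hsup : SupClosed N)
    (hinf : InfClosed N) {s : ℝ} (hs : ∀ x ∈ N, φ x ≤ s) (hs0 : 0 < s) {x : ℕ → G}
    (hxN : ∀ n, x n ∈ N) (hxs : ∀ n, s - s / 2 / 2 / 2 ^ n ≤ φ (x n)) :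
    ∃ z, 0 ≤ z ∧ (∀ n, z ≤ x n) ∧ s / 2 ≤ φ z := by
  let y : ℕ → G := fun n => (Finset.range (n + 1)).inf' Finset.nonempty_range_add_one x
  have hyN (n : ℕ) : y n ∈ N := hinf.finsetInf'_mem _ fun i _ => hxN i
  have hyx (n : ℕ) : y n ≤ x n := Finset.inf'_le x (Finset.self_mem_range_succ n)
  have hy : Antitone y := fun m n hmn =>
    Finset.inf'_mono x (Finset.range_mono (Nat.succ_le_succ hmn)) _
  have hφy (n : ℕ) : s / 2 ≤ φ (y n) := by
    have hloss : s - φ (y n) ≤ s / 2 := calc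
      s - φ (y n) ≤ ∑ i ∈ Finset.range (n + 1), (s - φ (x i)) :=
        sub_map_inf'_le_sum φ hsup hinf hs _ fun i _ => hxN i
      _ ≤ ∑ i ∈ Finset.range (n + 1), s / 2 / 2 / 2 ^ i :=
        Finset.sum_le_sum fun i _ => sub_le_comm.1 (hxs i)
      _ ≤ s / 2 := sum_le_hasSum _ (fun i _ => by positivity) (hasSum_geometric_two' _)
    linarith
  obtain ⟨z, hz, hφz⟩ := hφ y hy fun n => hN0 _ (hyN n)
  exact ⟨z, hz.2 (forall_mem_range.2 fun n => hN0 _ (hyN n)),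
    fun n => (hz.1 (mem_range_self n)).trans (hyx n), ge_of_tendsto' hφz hφy⟩

end Lattice

section NormedLattice

variable {E : Type*} [NormedAddCommGroup E] [NormedSpace ℝ E] [Lattice E]

/-- The elements of the order interval `[0, e]` on which the functional `μ` vanishes; `μ` is
strictly positive when this set is trivial and `e` is large enough. -/
def nullInterval (e : E) (μ : StrongDual ℝ E) : Set E :=
  {x ∈ Icc 0 e | μ x = 0}

/-- The size, measured by `I`, of the null set of `μ` in `[0, e]`; the functional sought is one
that minimizes it. -/
noncomputable def nullMass (I : E →ₚ[ℝ] ℝ) (e : E) (μ : StrongDual ℝ E) : ℝ :=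
  sSup (I '' nullInterval e μ)

variable {I : E →ₚ[ℝ] ℝ} {e : E} {μ ν : StrongDual ℝ E} {C : Set E}

lemma zero_mem_nullInterval (he : 0 ≤ e) (μ : StrongDual ℝ E) : 0 ∈ nullInterval e μ :=
  ⟨left_mem_Icc.2 he, map_zero μ⟩

lemma nullInterval_add_subset (hμ : ∀ x, 0 ≤ x → 0 ≤ μ x) (hν : ∀ x, 0 ≤ x → 0 ≤ ν x) :
    nullInterval e (μ + ν) ⊆ nullInterval e μ ∩ nullInterval e ν := by
  rintro x ⟨hx, hx0⟩
  obtain ⟨hμx, hνx⟩ := (add_eq_zero_iff_of_nonneg (hμ x hx.1) (hν x hx.1)).1 hx0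
  exact ⟨⟨hx, hμx⟩, ⟨hx, hνx⟩⟩

lemma map_le_nullMass {x : E} (hx : x ∈ nullInterval e μ) : I x ≤ nullMass I e μ :=
  le_csSup ⟨I e, forall_mem_image.2 fun _ hy => OrderHomClass.mono I hy.1.2⟩
    (mem_image_of_mem I hx)

lemma nullMass_le (he : 0 ≤ e) {r : ℝ} (h : ∀ x ∈ nullInterval e μ, I x ≤ r) :
    nullMass I e μ ≤ r :=
  csSup_le ⟨_, mem_image_of_mem I (zero_mem_nullInterval he μ)⟩ (forall_mem_image.2 h)

lemma nullMass_nonneg (he : 0 ≤ e) (μ : StrongDual ℝ E) : 0 ≤ nullMass I e μ :=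
  map_zero I ▸ map_le_nullMass (zero_mem_nullInterval he μ)

lemma exists_isMinOn_nullMass (I : E →ₚ[ℝ] ℝ) (he : 0 ≤ e) (hneg : ∀ x, 0 ≤ x → -x ∈ C) :
    ∃ μ ∈ polarCone C, IsMinOn (nullMass I e) (polarCone C) μ := by
  have hbdd : BddBelow (nullMass I e '' polarCone C) :=
    ⟨0, forall_mem_image.2 fun μ _ => nullMass_nonneg he μ⟩
  obtain ⟨u, -, hu, hu_mem⟩ :=
    exists_seq_tendsto_sInf ⟨_, mem_image_of_mem (nullMass I e) (zero_mem_polarCone C)⟩ hbdd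
  choose f hf hfu using hu_mem
  obtain ⟨μ, hμ, hμf⟩ := exists_mem_polarCone_forall_eq_zero hneg hf
  have hle (n : ℕ) : nullMass I e μ ≤ u n := hfu n ▸
    nullMass_le he fun x hx => map_le_nullMass ⟨hx.1, hμf x hx.1.1 hx.2 n⟩
  exact ⟨μ, hμ, fun ν hν =>
    (ge_of_tendsto' hu hle).trans (csInf_le hbdd (mem_image_of_mem _ hν))⟩

variable [IsOrderedAddMonoid E]

lemma convex_nullInterval [PosSMulMono ℝ E] (e : E) (μ : StrongDual ℝ E) :
    Convex ℝ (nullInterval e μ) :=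
  (convex_Icc 0 e).inter (convex_hyperplane μ.isLinear 0)

lemma map_add_map_of_mem_nullInterval {x y : E} (hx : x ∈ nullInterval e μ)
    (hy : y ∈ nullInterval e μ) : μ (x ⊓ y) + μ (x ⊔ y) = 0 := by
  rw [← map_add, inf_add_sup, map_add, hx.2, hy.2, add_zero]

lemma supClosed_nullInterval (hμ : ∀ x, 0 ≤ x → 0 ≤ μ x) : SupClosed (nullInterval e μ) := by
  intro x hx y hy
  have hinf := hμ (x ⊓ y) (le_inf hx.1.1 hy.1.1)
  have hsup := hμ (x ⊔ y) (le_sup_of_le_left hx.1.1)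
  exact ⟨⟨le_sup_of_le_left hx.1.1, sup_le hx.1.2 hy.1.2⟩,
    by linarith [map_add_map_of_mem_nullInterval hx hy]⟩

lemma infClosed_nullInterval (hμ : ∀ x, 0 ≤ x → 0 ≤ μ x) : InfClosed (nullInterval e μ) := by
  intro x hx y hy
  have hinf := hμ (x ⊓ y) (le_inf hx.1.1 hy.1.1)
  have hsup := hμ (x ⊔ y) (le_sup_of_le_left hx.1.1)
  exact ⟨⟨le_inf hx.1.1 hy.1.1, inf_le_of_left_le hx.1.2⟩,
    by linarith [map_add_map_of_mem_nullInterval hx hy]⟩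

lemma exists_pos_forall_le_dist {C : ProperCone ℝ E} (hpos : ∀ x ∈ C, 0 ≤ x → x = 0)
    (hneg : ∀ x : E, 0 ≤ x → -x ∈ C) {I : E →ₚ[ℝ] ℝ} (hI : SigmaOrderContinuous I) {N : Set E}
    (hN0 : ∀ x ∈ N, 0 ≤ x) (hsup : SupClosed N) (hinf : InfClosed N) {s : ℝ}
    (hs : ∀ x ∈ N, I x ≤ s) (hs0 : 0 < s) :
    ∃ ε > 0, ∃ δ > 0, ∀ x ∈ N, s - ε ≤ I x → ∀ c ∈ C, δ ≤ dist x c := by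
  by_contra! hcon
  have hseq (n : ℕ) : ∃ x ∈ N, s - s / 2 / 2 / 2 ^ n ≤ I x ∧ ∃ c ∈ C, dist x c < (1 / 2) ^ n :=
    hcon _ (by positivity) _ (by positivity)
  choose x hxN hxs c hcC hxc using hseq
  have hdist : Tendsto (fun n => dist (x n) (c n)) atTop (𝓝 0) :=
    squeeze_zero (fun n => dist_nonneg) (fun n => (hxc n).le)
      (tendsto_pow_atTop_nhds_zero_of_lt_one (by norm_num) (by norm_num))
  obtain ⟨z, hz0, hzx, hIz⟩ :=
    exists_nonneg_forall_le_half_le_map hI hN0 hsup hinf hs hs0 hxN hxs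
  have hz : z = 0 := hpos z (mem_of_le_of_tendsto_dist_zero hneg hzx hcC hdist) hz0
  rw [hz, map_zero] at hIz
  linarith

lemma exists_mem_polarCone_nullMass_lt [PosSMulMono ℝ E] {C : ProperCone ℝ E}
    (hpos : ∀ x ∈ C, 0 ≤ x → x = 0) (hneg : ∀ x : E, 0 ≤ x → -x ∈ C)
    (hI : SigmaOrderContinuous I) (he : 0 ≤ e) (hμ : μ ∈ polarCone (C : Set E))
    (hμ0 : 0 < nullMass I e μ) :
    ∃ ν ∈ polarCone (C : Set E), nullMass I e ν < nullMass I e μ := by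
  have hμ_nonneg (x : E) : 0 ≤ x → 0 ≤ μ x := nonneg_of_mem_polarCone hneg hμ
  obtain ⟨ε, hε, δ, hδ, hdist⟩ := exists_pos_forall_le_dist hpos hneg hI
    (fun x hx => hx.1.1) (supClosed_nullInterval hμ_nonneg) (infClosed_nullInterval hμ_nonneg)
    (fun x => map_le_nullMass) hμ0
  have hconvex : Convex ℝ (nullInterval e μ ∩ {x | nullMass I e μ - ε ≤ I x}) :=
    (convex_nullInterval e μ).inter (convex_halfSpace_ge I.toLinearMap.isLinear _)
  obtain ⟨ν, hν, hν_pos⟩ := exists_mem_polarCone_forall_pos (C := C.toPointedCone) hconvex hδ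
    fun x hx => hdist x hx.1 hx.2
  refine ⟨μ + ν, add_mem_polarCone hμ hν,
    (nullMass_le he fun x hx => ?_).trans_lt (sub_lt_self _ hε)⟩
  obtain ⟨hxμ, hxν⟩ := nullInterval_add_subset hμ_nonneg
    (fun x => nonneg_of_mem_polarCone hneg hν) hx
  by_contra! hlt
  exact (hν_pos x ⟨hxμ, hlt.le⟩).ne' hxν.2

theorem exists_strictlyPositive_mem_polarCone [PosSMulMono ℝ E] {C : ProperCone ℝ E}
    (hpos : ∀ x ∈ C, 0 ≤ x → x = 0) (hneg : ∀ x : E, 0 ≤ x → -x ∈ C)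
    (hI : SigmaOrderContinuous I) (he : 0 ≤ e) (hIe : ∀ x, 0 ≤ x → I (x ⊓ e) ≤ 0 → x = 0) :
    ∃ μ ∈ polarCone (C : Set E), ∀ x, 0 ≤ x → x ≠ 0 → 0 < μ x := by
  obtain ⟨μ, hμ, hmin⟩ := exists_isMinOn_nullMass I he hneg
  have hμ_null : nullMass I e μ ≤ 0 := by
    by_contra! hμ0
    obtain ⟨ν, hν, hlt⟩ := exists_mem_polarCone_nullMass_lt hpos hneg hI he hμ hμ0
    exact (hmin hν).not_gt hlt
  have hμ_nonneg {x : E} : 0 ≤ x → 0 ≤ μ x := nonneg_of_mem_polarCone hneg hμ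
  refine ⟨μ, hμ, fun x hx hx0 => (hμ_nonneg hx).lt_of_ne' fun hμx => hx0 (hIe x hx ?_)⟩
  have hle : μ (x ⊓ e) ≤ μ x := by
    simpa using hμ_nonneg (sub_nonneg.2 (inf_le_left : x ⊓ e ≤ x))
  have hmem : x ⊓ e ∈ nullInterval e μ := ⟨⟨le_inf hx he, inf_le_right⟩,
    (hle.trans_eq hμx).antisymm (hμ_nonneg (le_inf hx he))⟩
  exact (map_le_nullMass hmem).trans hμ_null

end NormedLattice

section Lp

variable {Ω : Type*} [MeasurableSpace Ω] {P : Measure Ω} {p q : ℝ≥0∞}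

instance {F : Type*} [NormedAddCommGroup F] [NormedSpace ℝ F] [PartialOrder F] [PosSMulMono ℝ F] :
    PosSMulMono ℝ (Lp F p P) where
  smul_le_smul_of_nonneg_left c hc x y hxy := by
    rw [← Lp.coeFn_le] at hxy ⊢
    filter_upwards [hxy, Lp.coeFn_smul c x, Lp.coeFn_smul c y] with ω hω hx hy
    rw [hx, hy]
    exact smul_le_smul_of_nonneg_left hω hc

lemma exists_pos_memLp (P : Measure Ω) [SigmaFinite P] (p : ℝ≥0∞) :
    ∃ w : Ω → ℝ, (∀ ω, 0 < w ω) ∧ MemLp w p P := by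
  obtain ⟨g, hg0, hg, hg_int⟩ := exists_pos_lintegral_lt_of_sigmaFinite P one_ne_zero
  have hg1 : MemLp (fun ω => (g ω : ℝ)) 1 P :=
    memLp_one_iff_integrable.2 ⟨by fun_prop, by
      simpa [HasFiniteIntegral] using hg_int.trans ENNReal.one_lt_top⟩
  -- The function is `g ^ (1 / p)`, the constant `1` when `p = ∞`.
  refine ⟨_, fun ω => ?_, by simpa only [one_div, inv_inv] using hg1.norm_rpow_div p⁻¹⟩
  exact Real.rpow_pos_of_pos (norm_pos_iff.2 (NNReal.coe_pos.2 (hg0 ω)).ne') _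

lemma exists_pos_Lp (P : Measure Ω) [SigmaFinite P] (p : ℝ≥0∞) :
    ∃ w : Lp ℝ p P, ∀ᵐ ω ∂P, 0 < w ω := by
  obtain ⟨w, hw0, hw⟩ := exists_pos_memLp P p
  exact ⟨hw.toLp w, hw.coeFn_toLp.mono fun ω hω => hω ▸ hw0 ω⟩

lemma exists_isGLB_ae_eq_iInf {y : ℕ → Lp ℝ p P} (hy : ∀ n, 0 ≤ y n) :
    ∃ z : Lp ℝ p P, IsGLB (range y) z ∧ ∀ᵐ ω ∂P, z ω = ⨅ n, y n ω := by
  have hy_ae : ∀ᵐ ω ∂P, ∀ n, 0 ≤ y n ω := ae_all_iff.2 fun n => (Lp.coeFn_nonneg _).2 (hy n)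
  have hbdd : ∀ᵐ ω ∂P, BddBelow (range fun n => y n ω) :=
    hy_ae.mono fun ω hω => ⟨0, forall_mem_range.2 hω⟩
  have hmeas : AEStronglyMeasurable (fun ω => ⨅ n, y n ω) P :=
    (AEMeasurable.iInf fun n => (Lp.aestronglyMeasurable (y n)).aemeasurable).aestronglyMeasurable
  have hmem : MemLp (fun ω => ⨅ n, y n ω) p P := by
    refine (Lp.memLp (y 0)).mono hmeas ?_
    filter_upwards [hy_ae, hbdd] with ω h0 hb
    rw [Real.norm_of_nonneg (le_ciInf h0), Real.norm_of_nonneg (h0 0)]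
    exact ciInf_le hb 0
  refine ⟨hmem.toLp _, ⟨forall_mem_range.2 fun n => ?_, fun x hx => ?_⟩, hmem.coeFn_toLp⟩
  · rw [← Lp.coeFn_le]
    filter_upwards [hmem.coeFn_toLp, hbdd] with ω hω hb
    exact hω.trans_le (ciInf_le hb n)
  · have hx_ae : ∀ᵐ ω ∂P, ∀ n, x ω ≤ y n ω :=
      ae_all_iff.2 fun n => (Lp.coeFn_le _ _).2 (hx (mem_range_self n))
    rw [← Lp.coeFn_le]
    filter_upwards [hmem.coeFn_toLp, hx_ae] with ω hω hle
    exact (le_ciInf hle).trans_eq hω.symm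

variable [p.HolderConjugate q]

lemma integrable_mul_Lp (x : Lp ℝ p P) (w : Lp ℝ q P) : Integrable (fun ω => x ω * w ω) P :=
  (Lp.memLp x).integrable_mul (Lp.memLp w)

variable [Fact (1 ≤ p)] [Fact (1 ≤ q)]

variable (p) in
/-- The positive functional on `L^p` given by integration against a nonnegative weight in the
conjugate space `L^q`. -/
noncomputable def weightedIntegral {w : Lp ℝ q P} (hw : ∀ᵐ ω ∂P, 0 ≤ w ω) :
    Lp ℝ p P →ₚ[ℝ] ℝ :=
  .mk₀ ((ContinuousLinearMap.mul ℝ ℝ).lpPairing P p q |>.flip w) fun x hx => by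
    rw [ContinuousLinearMap.coe_coe, ContinuousLinearMap.flip_apply,
      ContinuousLinearMap.lpPairing_eq_integral]
    refine integral_nonneg_of_ae ?_
    filter_upwards [(Lp.coeFn_nonneg x).2 hx, hw] with ω hxω hwω using mul_nonneg hxω hwω

lemma weightedIntegral_apply {w : Lp ℝ q P} (hw : ∀ᵐ ω ∂P, 0 ≤ w ω) (x : Lp ℝ p P) :
    weightedIntegral p hw x = ∫ ω, x ω * w ω ∂P :=
  ContinuousLinearMap.lpPairing_eq_integral ..

lemma sigmaOrderContinuous_weightedIntegral {w : Lp ℝ q P} (hw : ∀ᵐ ω ∂P, 0 ≤ w ω) :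
    SigmaOrderContinuous (weightedIntegral p hw) := by
  intro y hy hy0
  obtain ⟨z, hz, hz_ae⟩ := exists_isGLB_ae_eq_iInf hy0
  have hy0_ae : ∀ᵐ ω ∂P, ∀ n, 0 ≤ y n ω := ae_all_iff.2 fun n => (Lp.coeFn_nonneg _).2 (hy0 n)
  have hy_ae : ∀ᵐ ω ∂P, Antitone fun n => y n ω := by
    filter_upwards [ae_all_iff.2 fun n => (Lp.coeFn_le _ _).2 (hy (Nat.le_succ n))] with ω hω
      using antitone_nat_of_succ_le hω
  refine ⟨z, hz, ?_⟩
  simp only [weightedIntegral_apply]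
  refine integral_tendsto_of_tendsto_of_antitone (fun n => integrable_mul_Lp (y n) w)
    (integrable_mul_Lp z w) ?_ ?_
  · filter_upwards [hy_ae, hw] with ω hyω hwω using hyω.mul_const hwω
  · filter_upwards [hy_ae, hy0_ae, hz_ae] with ω hyω hy0ω hzω
    rw [hzω]
    exact (tendsto_atTop_ciInf hyω ⟨0, forall_mem_range.2 hy0ω⟩).mul_const _

lemma eq_zero_of_weightedIntegral_inf_le_zero {w : Lp ℝ q P} (hw : ∀ᵐ ω ∂P, 0 < w ω)
    {e : Lp ℝ p P} (he : ∀ᵐ ω ∂P, 0 < e ω) {x : Lp ℝ p P} (hx : 0 ≤ x)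
    (hxe : weightedIntegral p (hw.mono fun _ => le_of_lt) (x ⊓ e) ≤ 0) : x = 0 := by
  have hinf : ∀ᵐ ω ∂P, (x ⊓ e) ω = min (x ω) (e ω) := Lp.coeFn_inf x e
  have hnonneg : 0 ≤ᵐ[P] fun ω => (x ⊓ e) ω * w ω := by
    filter_upwards [hinf, (Lp.coeFn_nonneg x).2 hx, he, hw] with ω hω hxω heω hwω
    exact mul_nonneg (hω ▸ le_min hxω heω.le) hwω.le
  have hzero : (fun ω => (x ⊓ e) ω * w ω) =ᵐ[P] 0 := by
    rw [← integral_eq_zero_iff_of_nonneg_ae hnonneg (integrable_mul_Lp _ w)]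
    rw [weightedIntegral_apply] at hxe
    exact hxe.antisymm (integral_nonneg_of_ae hnonneg)
  refine (Lp.eq_zero_iff_ae_eq_zero).2 ?_
  filter_upwards [hzero, hinf, he, hw] with ω h0 hω heω hwω
  have hmin : min (x ω) (e ω) = 0 := hω ▸ (mul_eq_zero.1 h0).resolve_right hwω.ne'
  rcases min_choice (x ω) (e ω) with hx_min | he_min
  · exact hx_min ▸ hmin
  · exact absurd (he_min ▸ hmin) heω.ne'

end Lp

/-- A closed convex cone given as a set, bundled as a proper cone so that Mathlib's separation
and closure results apply; sums are obtained by doubling midpoints. -/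
def properConeOfConvex {E : Type*} [TopologicalSpace E] [AddCommGroup E] [Module ℝ E] {C : Set E}
    (hclosed : IsClosed C) (hconv : Convex ℝ C) (h0 : 0 ∈ C)
    (hcone : ∀ c : ℝ, 0 ≤ c → ∀ x ∈ C, c • x ∈ C) : ProperCone ℝ E where
  carrier := C
  zero_mem' := h0
  add_mem' {x y} hx hy := by
    have hmid := hcone 2 zero_le_two _
      (hconv hx hy one_half_pos.le one_half_pos.le (add_halves 1))
    simpa [smul_smul] using hmid
  smul_mem' c x hx := hcone c c.2 x hx
  isClosed' := hclosed

end KrepsYan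

theorem stmt2_general {Ω : Type*} [MeasurableSpace Ω] (P : Measure Ω) [SigmaFinite P]
    {p : ℝ≥0∞} [Fact (1 ≤ p)] (C : Set (Lp ℝ p P))
    (hclosed : IsClosed C) (hconv : Convex ℝ C)
    (hcone : ∀ (c : ℝ), 0 ≤ c → ∀ x ∈ C, c • x ∈ C)
    (hC_pos : C ∩ {x : Lp ℝ p P | 0 ≤ᵐ[P] ⇑x} = {0})
    (hneg : ∀ x : Lp ℝ p P, 0 ≤ᵐ[P] ⇑x → -x ∈ C) :
    ∃ μ : (Lp ℝ p P) →L[ℝ] ℝ,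
      (∀ x : Lp ℝ p P, 0 ≤ᵐ[P] ⇑x → x ≠ 0 → 0 < μ x) ∧
      (∀ x ∈ C, μ x ≤ 0) := by
  simp only [Lp.coeFn_nonneg] at hC_pos hneg ⊢
  have h0 : 0 ∈ C := (hC_pos.ge rfl).1
  have : Fact (1 ≤ p.conjExponent) := ⟨ENNReal.HolderConjugate.one_le _ p⟩
  obtain ⟨w, hw⟩ := KrepsYan.exists_pos_Lp P p.conjExponent
  obtain ⟨e, he⟩ := KrepsYan.exists_pos_Lp P p
  obtain ⟨μ, hμC, hμ⟩ := KrepsYan.exists_strictlyPositive_mem_polarCone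
    (C := KrepsYan.properConeOfConvex hclosed hconv h0 hcone)
    (fun x hxC hx => hC_pos.le ⟨hxC, hx⟩) hneg
    (KrepsYan.sigmaOrderContinuous_weightedIntegral (hw.mono fun _ => le_of_lt))
    ((Lp.coeFn_nonneg e).1 (he.mono fun _ => le_of_lt))
    fun x => KrepsYan.eq_zero_of_weightedIntegral_inf_le_zero hw he
  exact ⟨μ, hμ, hμC⟩

/-- Kreps–Yan theorem for `L^∞` with the norm topology: for any norm-closed
convex cone `C ⊆ L^∞` with `C ∩ L^∞_+ = {0}` and `-L^∞_+ ⊆ C`, there is a continuous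
linear functional `μ` on `L^∞` that is strictly positive and non-positive on `C`. -/
theorem stmt2 {Ω : Type*} [MeasurableSpace Ω] (P : Measure Ω) [IsProbabilityMeasure P]
    (C : Set (Lp ℝ ⊤ P))
    (hclosed : IsClosed C) (hconv : Convex ℝ C)
    (hcone : ∀ (c : ℝ), 0 ≤ c → ∀ x ∈ C, c • x ∈ C)
    (hC_pos : C ∩ {x : Lp ℝ ⊤ P | 0 ≤ᵐ[P] ⇑x} = {0})
    (hneg : ∀ x : Lp ℝ ⊤ P, 0 ≤ᵐ[P] ⇑x → -x ∈ C) :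
    ∃ μ : (Lp ℝ ⊤ P) →L[ℝ] ℝ,
      (∀ x : Lp ℝ ⊤ P, 0 ≤ᵐ[P] ⇑x → x ≠ 0 → 0 < μ x) ∧
      (∀ x ∈ C, μ x ≤ 0) :=
  stmt2_general P C hclosed hconv hcone hC_pos hneg
end

section
/- Let C ⊆ L^∞ be a norm-closed convex cone with -L^∞_+ ⊆ C and C ∩ L^∞_+ = {0}, and let Q be a probability measure equivalent to P with φ(1) := -sup_{x∈C₁} ∫x dQ finite (C₁ = {x ∈ C : ess inf x ≥ -1}). Then for every λ > -φ(1) there exists ν ∈ ba^+ such that μ = Q + ν satisfies ⟨x, μ⟩ ≤ 0 for all x ∈ C. -/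
open MeasureTheory

/-!
Write `q x = ∫ x dQ` and let `p y` be the superhedging price of `y`: the infimum of `l * s - q x`
over `x ∈ C` and `0 ≤ s` with `y ≤ x + s • 1`. It is sublinear, and finite because `q x ≤ l * s`
whenever `x ∈ C` is bounded below by `-s`. A linear functional `ν ≤ p` is nonnegative, is at most
`-q` on `C` and satisfies `ν 1 ≤ l`. To avoid the infimum, such a `ν` is produced by the M. Riesz
extension theorem applied to the functional `(0, a) ↦ a` and the convex cone in `L^∞ × ℝ` of the
pairs `(y, a)` for which `a` occurs in the infimum defining `p y`.
-/

section OrderedModule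

variable {E : Type*} [AddCommGroup E] [Module ℝ E]

theorem exists_pointedCone_coe_eq {C : Set E} (hne : C.Nonempty) (hconv : Convex ℝ C)
    (hcone : ∀ c : ℝ, 0 ≤ c → ∀ x ∈ C, c • x ∈ C) : ∃ K : PointedCone ℝ E, (K : Set E) = C := by
  have hadd : ∀ x ∈ C, ∀ y ∈ C, x + y ∈ C := fun x hx y hy ↦ by
    rw [← midpoint_add_self ℝ x y, ← two_smul ℝ]
    exact hcone 2 zero_le_two _ (hconv.midpoint_mem hx hy)
  exact ⟨.ofConeComb C hne fun x hx y hy a ha b hb ↦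
    hadd _ (hcone a ha x hx) _ (hcone b hb y hy), rfl⟩

variable [PartialOrder E]

/-- An order unit of an ordered real vector space: a nonnegative element whose multiples eventually
dominate every vector. The constant function `1` plays this role in `L^∞`. -/
structure IsOrderUnit (e : E) : Prop where
  nonneg : 0 ≤ e
  exists_le_smul : ∀ y, ∃ t : ℝ, y ≤ t • e

variable [IsOrderedAddMonoid E] [PosSMulMono ℝ E]

/-- The pairs `(y, a)` where `a` is the cost of a portfolio superhedging `y`, i.e. of some
`x + s • e ≥ y` with `x ∈ C` at the cost `-q x` and `0 ≤ s` units of `e` at the cost `l` each. The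
superhedging price of `y` is the infimum of these `a`. The summands are generated by the pairs
`(x, -q x)`, `(-y, 0)` with `0 ≤ y`, and `(e, l)`. -/
def superhedgingCone (C : PointedCone ℝ E) (q : E →ₗ[ℝ] ℝ) (e : E) (l : ℝ) :
    PointedCone ℝ (E × ℝ) :=
  C.map (LinearMap.id.prod (-q)) ⊔ (PointedCone.positive ℝ E).map (-LinearMap.inl ℝ E ℝ) ⊔
    (PointedCone.positive ℝ ℝ).map (LinearMap.toSpanSingleton ℝ (E × ℝ) (e, l))

theorem mem_superhedgingCone {C : PointedCone ℝ E} {q : E →ₗ[ℝ] ℝ} {e : E} {l : ℝ} {z : E × ℝ} :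
    z ∈ superhedgingCone C q e l ↔
      ∃ x ∈ C, ∃ s : ℝ, 0 ≤ s ∧ z.1 ≤ x + s • e ∧ z.2 = l * s - q x := by
  simp only [superhedgingCone, Submodule.mem_sup, PointedCone.mem_map, PointedCone.mem_positive]
  constructor
  · rintro ⟨_, ⟨_, ⟨x, hx, rfl⟩, _, ⟨y, hy, rfl⟩, rfl⟩, _, ⟨s, hs, rfl⟩, rfl⟩
    refine ⟨x, hx, s, hs, by simpa using hy, ?_⟩
    change -q x + -0 + s * l = l * s - q x
    ring
  · rintro ⟨x, hx, s, hs, hle, hz⟩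
    refine ⟨_, ⟨_, ⟨x, hx, rfl⟩, _, ⟨x + s • e - z.1, sub_nonneg.2 hle, rfl⟩, rfl⟩,
      _, ⟨s, hs, rfl⟩, Prod.ext ?_ ?_⟩
    · change x + -(x + s • e - z.1) + s • e = z.1
      abel
    · change -q x + -0 + s * l = z.2
      rw [hz]
      ring

variable {C : PointedCone ℝ E} {q : E →ₗ[ℝ] ℝ} {e : E} {l : ℝ}

theorem apply_le_mul_of_neg_smul_le (he : 0 ≤ e) (hq : ∀ x ∈ C, -e ≤ x → q x ≤ l) {x : E}
    (hx : x ∈ C) {s : ℝ} (hs : 0 ≤ s) (hsx : -(s • e) ≤ x) : q x ≤ l * s := by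
  have h_gt : ∀ t, s < t → q x ≤ l * t := fun t hst ↦ by
    have ht : 0 < t := hs.trans_lt hst
    have hle : -e ≤ t⁻¹ • x := by
      rw [le_inv_smul_iff_of_pos ht, smul_neg]
      exact (neg_le_neg (smul_le_smul_of_nonneg_right hst.le he)).trans hsx
    have := hq _ (C.smul_mem (inv_nonneg.2 ht.le) hx) hle
    rwa [map_smul, smul_eq_mul, inv_mul_le_iff₀ ht, mul_comm] at this
  exact ge_of_tendsto ((continuous_const_mul l).tendsto s |>.mono_left nhdsWithin_le_nhds)
    (Filter.eventually_of_mem (self_mem_nhdsWithin (s := Set.Ioi s)) h_gt)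

theorem nonneg_of_mk_zero_mem_superhedgingCone (he : 0 ≤ e) (hq : ∀ x ∈ C, -e ≤ x → q x ≤ l)
    {a : ℝ} (ha : (0, a) ∈ superhedgingCone C q e l) : 0 ≤ a := by
  obtain ⟨x, hx, s, hs, hle, rfl⟩ := mem_superhedgingCone.1 ha
  exact sub_nonneg.2 (apply_le_mul_of_neg_smul_le he hq hx hs (neg_le_iff_add_nonneg.2 hle))

theorem exists_mk_mem_superhedgingCone (he : IsOrderUnit e) (C : PointedCone ℝ E) (q : E →ₗ[ℝ] ℝ)
    (l : ℝ) (y : E) : ∃ a, (y, a) ∈ superhedgingCone C q e l := by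
  obtain ⟨t, ht⟩ := he.exists_le_smul y
  refine ⟨_, mem_superhedgingCone.2 ⟨0, C.zero_mem, max t 0, le_max_right t 0, ?_, rfl⟩⟩
  rw [zero_add]
  exact ht.trans (smul_le_smul_of_nonneg_right (le_max_left t 0) he.nonneg)

theorem exists_linearMap_le_of_mem_superhedgingCone (he : IsOrderUnit e)
    (hq : ∀ x ∈ C, -e ≤ x → q x ≤ l) :
    ∃ ν : E →ₗ[ℝ] ℝ, ∀ y a, (y, a) ∈ superhedgingCone C q e l → ν y ≤ a := by
  let f : (E × ℝ) →ₗ.[ℝ] ℝ :=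
    ⟨Submodule.prod ⊥ ⊤, (LinearMap.snd ℝ E ℝ).comp (Submodule.subtype _)⟩
  have f_nonneg : ∀ z : f.domain, (z : E × ℝ) ∈ superhedgingCone C q e l → 0 ≤ f z := by
    rintro ⟨⟨y, a⟩, hya⟩ hz
    obtain rfl : y = 0 := hya.1
    exact nonneg_of_mk_zero_mem_superhedgingCone he.nonneg hq hz
  have f_dense : ∀ z, ∃ w : f.domain, (w : E × ℝ) + z ∈ superhedgingCone C q e l := by
    rintro ⟨y, b⟩
    obtain ⟨a, ha⟩ := exists_mk_mem_superhedgingCone he C q l y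
    exact ⟨⟨(0, a - b), rfl, trivial⟩, by simpa using ha⟩
  obtain ⟨g, hgf, hg⟩ := riesz_extension _ f f_nonneg f_dense
  refine ⟨-(g ∘ₗ LinearMap.inl ℝ E ℝ), fun y a hya ↦ ?_⟩
  have hsplit : g (y, a) = g (y, 0) + a := by
    have hga : g (0, a) = a := hgf ⟨(0, a), rfl, trivial⟩
    rw [← hga, ← map_add, Prod.mk_add_mk, add_zero, zero_add, hga]
  exact neg_le_iff_add_nonneg'.2 (hsplit ▸ hg _ hya)

theorem exists_linearMap_nonneg_add_nonpos (he : IsOrderUnit e)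
    (hq : ∀ x ∈ C, -e ≤ x → q x ≤ l) :
    ∃ ν : E →ₗ[ℝ] ℝ, (∀ x, 0 ≤ x → 0 ≤ ν x) ∧ ν e ≤ l ∧ ∀ x ∈ C, q x + ν x ≤ 0 := by
  obtain ⟨ν, hν⟩ := exists_linearMap_le_of_mem_superhedgingCone he hq
  refine ⟨ν, fun x hx ↦ ?_, ?_, fun x hx ↦ ?_⟩
  · have := hν (-x) 0
      (mem_superhedgingCone.2 ⟨0, C.zero_mem, 0, le_rfl, by simpa using hx, by simp⟩)
    rwa [map_neg, neg_nonpos] at this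
  · exact hν e l (mem_superhedgingCone.2 ⟨0, C.zero_mem, 1, zero_le_one, by simp, by simp⟩)
  · have := hν x (-q x) (mem_superhedgingCone.2 ⟨x, hx, 0, le_rfl, by simp, by simp⟩)
    linarith

end OrderedModule

section OrderUnitNorm

variable {E : Type*} [SeminormedAddCommGroup E] [NormedSpace ℝ E] [PartialOrder E]
  [IsOrderedAddMonoid E] {e : E}

theorem abs_apply_le_of_forall_le_norm_smul (he : ∀ y : E, y ≤ ‖y‖ • e) {ν : E →ₗ[ℝ] ℝ}
    (hν : ∀ x, 0 ≤ x → 0 ≤ ν x) (y : E) : |ν y| ≤ ν e * ‖y‖ := by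
  have hle : ∀ z, ν z ≤ ν e * ‖z‖ := fun z ↦ by
    have := hν _ (sub_nonneg.2 (he z))
    rwa [map_sub, map_smul, smul_eq_mul, sub_nonneg, mul_comm] at this
  exact abs_le'.2 ⟨hle y, by simpa using hle (-y)⟩

variable [PosSMulMono ℝ E]

theorem isOrderUnit_of_forall_le_norm_smul (he : ∀ y : E, y ≤ ‖y‖ • e) : IsOrderUnit e where
  nonneg := by
    have : 0 ≤ (‖e‖ + 1) • e := by
      simpa [add_smul, ← neg_le_iff_add_nonneg] using he (-e)
    exact nonneg_of_smul_nonneg_of_pos_left this (by positivity)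
  exists_le_smul y := ⟨‖y‖, he y⟩

theorem exists_continuousLinearMap_nonneg_add_nonpos {C : PointedCone ℝ E} {q : E →ₗ[ℝ] ℝ} {l : ℝ}
    (he : ∀ y : E, y ≤ ‖y‖ • e) (hq : ∀ x ∈ C, -e ≤ x → q x ≤ l) :
    ∃ ν : E →L[ℝ] ℝ, ‖ν‖ ≤ l ∧ (∀ x, 0 ≤ x → 0 ≤ ν x) ∧ ∀ x ∈ C, q x + ν x ≤ 0 := by
  have he_unit := isOrderUnit_of_forall_le_norm_smul he
  obtain ⟨ν, hν, hνe, hνC⟩ := exists_linearMap_nonneg_add_nonpos he_unit hq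
  exact ⟨ν.mkContinuous (ν e) (abs_apply_le_of_forall_le_norm_smul he hν),
    (ν.mkContinuous_norm_le (hν e he_unit.nonneg) _).trans hνe, hν, hνC⟩

end OrderUnitNorm

section Lp

variable {Ω : Type*} [MeasurableSpace Ω] {P Q : Measure Ω}

instance instPosSMulMonoLp {𝕜 E : Type*} [NormedRing 𝕜] [PartialOrder 𝕜] [NormedAddCommGroup E]
    [PartialOrder E] [IsOrderedAddMonoid E] [Module 𝕜 E] [IsBoundedSMul 𝕜 E] [PosSMulMono 𝕜 E]
    {p : ENNReal} : PosSMulMono 𝕜 (Lp E p P) :=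
  .of_smul_nonneg fun c hc x hx ↦ by
    rw [← Lp.coeFn_nonneg] at hx ⊢
    filter_upwards [hx, Lp.coeFn_smul c x] with ω hxω hcx
    rw [hcx]
    exact smul_nonneg hc hxω

theorem ae_norm_coeFn_le_norm {E : Type*} [NormedAddCommGroup E] (x : Lp E ⊤ P) :
    ∀ᵐ ω ∂P, ‖x ω‖ ≤ ‖x‖ := by
  filter_upwards [ae_le_eLpNormEssSup (f := x) (μ := P)] with ω hω
  rw [Lp.norm_def, eLpNorm_exponent_top, ← toReal_enorm]
  exact ENNReal.toReal_mono (eLpNorm_exponent_top (f := x) ▸ Lp.eLpNorm_ne_top x) hω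

theorem le_essInf_coeFn [NeZero P] {x : Lp ℝ ⊤ P} {c : ℝ} (hc : ∀ᵐ ω ∂P, c ≤ x ω) :
    c ≤ essInf x P :=
  le_essInf_of_ae_le c hc <| Filter.IsBoundedUnder.isCoboundedUnder_ge
    ⟨‖x‖, (ae_norm_coeFn_le_norm x).mono fun _ h ↦ (le_abs_self _).trans h⟩

theorem integrable_coeFn_of_absolutelyContinuous {E : Type*} [NormedAddCommGroup E]
    [IsFiniteMeasure Q] (hQP : Q ≪ P) (x : Lp E ⊤ P) : Integrable x Q :=
  .of_bound ((Lp.aestronglyMeasurable x).mono_ac hQP) ‖x‖ (hQP.ae_le (ae_norm_coeFn_le_norm x))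

/-- Integration against a finite measure `Q ≪ P` as a linear map on `L^∞(P)`; for real-valued
functions this is the element of the dual of `L^∞(P)` identified with `Q`. -/
noncomputable def integralLinearMap (E : Type*) [NormedAddCommGroup E] [NormedSpace ℝ E]
    [IsFiniteMeasure Q] (hQP : Q ≪ P) : Lp E ⊤ P →ₗ[ℝ] E where
  toFun x := ∫ ω, x ω ∂Q
  map_add' x y := by
    rw [integral_congr_ae (hQP.ae_le (Lp.coeFn_add x y))]
    exact integral_add (integrable_coeFn_of_absolutelyContinuous hQP x)
      (integrable_coeFn_of_absolutelyContinuous hQP y)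
  map_smul' c x := by
    rw [integral_congr_ae (hQP.ae_le (Lp.coeFn_smul c x))]
    exact integral_smul c _

end Lp

theorem stmt17_general {Ω : Type*} [MeasurableSpace Ω] {P Q : Measure Ω} [IsFiniteMeasure Q]
    (hQP : Q ≪ P) (C : PointedCone ℝ (Lp ℝ ⊤ P)) {l : ℝ}
    (hl : ∀ x ∈ C, (∀ᵐ ω ∂P, -1 ≤ x ω) → ∫ ω, x ω ∂Q ≤ l) :
    ∃ ν : Lp ℝ ⊤ P →L[ℝ] ℝ, ‖ν‖ ≤ l ∧ (∀ x : Lp ℝ ⊤ P, 0 ≤ᵐ[P] x → 0 ≤ ν x) ∧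
      ∀ x ∈ C, (∫ ω, x ω ∂Q) + ν x ≤ 0 := by
  let e : Lp ℝ ⊤ P := (memLp_top_const (1 : ℝ)).toLp _
  have he₁ : e =ᵐ[P] 1 := MemLp.coeFn_toLp _
  have he : ∀ y : Lp ℝ ⊤ P, y ≤ ‖y‖ • e := fun y ↦ by
    rw [← Lp.coeFn_le]
    filter_upwards [ae_norm_coeFn_le_norm y, Lp.coeFn_smul ‖y‖ e, he₁] with ω hy hs h1
    simpa [hs, h1] using (le_abs_self _).trans hy
  have hq : ∀ x ∈ C, -e ≤ x → integralLinearMap ℝ hQP x ≤ l := fun x hx hex ↦ by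
    refine hl x hx ?_
    filter_upwards [(Lp.coeFn_le _ _).2 hex, Lp.coeFn_neg e, he₁] with ω hx hn h1
    rwa [hn, Pi.neg_apply, h1] at hx
  simpa only [Lp.coeFn_nonneg, integralLinearMap, LinearMap.coe_mk, AddHom.coe_mk] using
    exists_continuousLinearMap_nonneg_add_nonpos he hq

/-- for `C` a norm-closed convex cone in `L^∞` with `-L^∞_+ ⊆ C` and
`C ∩ L^∞_+ = {0}`, and `Q ∼ P` with `φ(1) = -sup_{x ∈ C₁} ∫ x dQ` finite, for every
`λ > -φ(1)` there exists `ν ∈ ba⁺` such that `μ = Q + ν` is non-positive on `C`. -/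
theorem stmt17 {Ω : Type*} [MeasurableSpace Ω] (P : Measure Ω) [IsProbabilityMeasure P]
    (C : Set (Lp ℝ ⊤ P))
    (hclosed : IsClosed C) (hconv : Convex ℝ C)
    (hcone : ∀ (c : ℝ), 0 ≤ c → ∀ x ∈ C, c • x ∈ C)
    (hC_pos : C ∩ {x : Lp ℝ ⊤ P | 0 ≤ᵐ[P] ⇑x} = {0})
    (hneg : ∀ x : Lp ℝ ⊤ P, 0 ≤ᵐ[P] ⇑x → -x ∈ C)
    (Q : Measure Ω) [IsProbabilityMeasure Q] (hQP : Q ≪ P) (hPQ : P ≪ Q)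
    (hbdd : BddAbove {r : ℝ | ∃ x ∈ C, (-1 : ℝ) ≤ essInf (⇑x) P ∧ r = ∫ ω, x ω ∂Q}) :
    ∀ l : ℝ,
      sSup {r : ℝ | ∃ x ∈ C, (-1 : ℝ) ≤ essInf (⇑x) P ∧ r = ∫ ω, x ω ∂Q} < l →
      ∃ ν : (Lp ℝ ⊤ P) →L[ℝ] ℝ,
        (∀ x : Lp ℝ ⊤ P, 0 ≤ᵐ[P] ⇑x → 0 ≤ ν x) ∧
        (∀ x ∈ C, (∫ ω, x ω ∂Q) + ν x ≤ 0) := by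
  obtain ⟨K, rfl⟩ := exists_pointedCone_coe_eq ⟨0, (hC_pos.ge rfl).1⟩ hconv hcone
  intro l hl
  obtain ⟨ν, -, hν⟩ := stmt17_general hQP K fun x hx hx1 ↦
    (le_csSup hbdd ⟨x, hx, le_essInf_coeFn hx1, rfl⟩).trans hl.le
  exact ⟨ν, hν⟩
end
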